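/- arXiv:1501.07475 — 7 statements merged into one kernel-verified Lean document; each statement's English description precedes it below -/
import Mathlib

section
/- Let a be an index of Fin n with successor a+1 in Fin n. Then ⁅Θ_{a+1,a}, Θ_{a,a+1}⁆ = Ξ_a, where ⁅D,D'⁆ = D ∘ D' − D' ∘ D is the commutator of derivations. (This is the paper's identity Ξ_a = [Θ_{a,a+1}, Θ_{a+1,a}], written in the commutator convention for derivations; since the fundamental-vector-field map of the conjugation action is an anti-homomorphism, the arguments appear in the opposite order.) -/
/-!
A derivation of a polynomial ring is determined by its values on the variables. There `Θ_{a,b}`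
acts by `x_{i,j} ↦ [i = a] x_{b,j} - [j = b] x_{i,a}` and `Ξ_a` is diagonal. Applying the two
`Θ`s in both orders, the mixed terms (one row move and one column move) cancel in the commutator,
and the terms with two row moves or two column moves are the eigenvalues of `Ξ_a`.
-/

open MvPolynomial

/-- The polynomial ring in the `n²` matrix entries. -/
abbrev MatPoly (n : ℕ) := MvPolynomial (Fin n × Fin n) ℂ

/-- The fundamental vector field `Θ_{a,b}` of the conjugation action. -/
noncomputable def Theta {n : ℕ} (a b : Fin n) : Derivation ℂ (MatPoly n) (MatPoly n) :=
  ∑ k : Fin n,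
    ((X (b, k) : MatPoly n) • (pderiv (a, k) : Derivation ℂ (MatPoly n) (MatPoly n))
      - (X (k, a) : MatPoly n) • (pderiv (k, b) : Derivation ℂ (MatPoly n) (MatPoly n)))

/-- The hyperbolic vector field `Ξ_a`, where `a'` denotes the successor `a + 1`. -/
noncomputable def Xi {n : ℕ} (a a' : Fin n) : Derivation ℂ (MatPoly n) (MatPoly n) :=
  ∑ k : Fin n,
    ((X (a, k) : MatPoly n) • (pderiv (a, k) : Derivation ℂ (MatPoly n) (MatPoly n))
      - (X (a', k) : MatPoly n) • (pderiv (a', k) : Derivation ℂ (MatPoly n) (MatPoly n))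
      - (X (k, a) : MatPoly n) • (pderiv (k, a) : Derivation ℂ (MatPoly n) (MatPoly n))
      + (X (k, a') : MatPoly n) • (pderiv (k, a') : Derivation ℂ (MatPoly n) (MatPoly n)))

lemma derivation_sum_apply {n : ℕ} (D : Fin n → Derivation ℂ (MatPoly n) (MatPoly n))
    (p : MatPoly n) : (∑ k, D k) p = ∑ k, D k p := by
  rw [← Derivation.coeFnAddMonoidHom_apply, map_sum, Finset.sum_apply]
  rfl

lemma Theta_X {n : ℕ} (a b i j : Fin n) :
    Theta a b (X (i, j)) =
      (if i = a then (X (b, j) : MatPoly n) else 0) - (if j = b then X (i, a) else 0) := by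
  simp only [Theta, derivation_sum_apply,
    Derivation.sub_apply, Derivation.smul_apply, pderiv_X, Pi.single_apply, Prod.mk.injEq,
    smul_eq_mul, mul_ite, mul_one, mul_zero, Finset.sum_sub_distrib, ite_and]
  by_cases h1 : i = a <;> by_cases h2 : j = b <;> simp [h1, h2]

lemma Xi_X {n : ℕ} (a a' i j : Fin n) :
    Xi a a' (X (i, j)) =
      (if i = a then (X (i, j) : MatPoly n) else 0) - (if i = a' then X (i, j) else 0)
        - (if j = a then X (i, j) else 0) + (if j = a' then X (i, j) else 0) := by
  simp only [Xi, derivation_sum_apply, Derivation.add_apply,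
    Derivation.sub_apply, Derivation.smul_apply, pderiv_X, Pi.single_apply, Prod.mk.injEq,
    smul_eq_mul, mul_ite, mul_one, mul_zero, Finset.sum_sub_distrib, Finset.sum_add_distrib,
    ite_and]
  congr 1
  · congr 1
    · congr 1
      · by_cases h : i = a <;> simp [h]
      · by_cases h : i = a' <;> simp [h]
    · by_cases h : j = a <;> simp [h]
  · by_cases h : j = a' <;> simp [h]

theorem stmt_2 {n : ℕ} (hn : 2 ≤ n) (a a' : Fin n) (ha : (a' : ℕ) = (a : ℕ) + 1) :
    ⁅Theta a' a, Theta a a'⁆ = Xi a a' := by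
  have hne : a ≠ a' := by
    rintro rfl
    omega
  apply MvPolynomial.derivation_ext
  rintro ⟨i, j⟩
  rw [Derivation.commutator_apply, Xi_X, Theta_X, Theta_X]
  by_cases h1 : i = a <;> by_cases h2 : i = a' <;> by_cases h3 : j = a <;>
    by_cases h4 : j = a' <;> simp_all [Theta_X, sub_eq_add_neg]
end

section
/- Let a be an index of Fin n with successor a+1 in Fin n, and let c, d ∈ Fin n. Then Ξ_a(x_{c,d}) = 0 if and only if c = d, or (c ∉ {a, a+1} and d ∉ {a, a+1}). (Corollary 4.2 of the paper, the statement concerning Ξ_a.) -/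
/-!
Every variable is an eigenvector of `Ξ_a`: by `Xi_X`,
`Ξ_a(x_{c,d}) = ([c = a] - [c = a+1] - [d = a] + [d = a+1]) x_{c,d}`.
The polynomial ring is a domain, so this vanishes exactly when the integer weight does. The weight
is `w(c) - w(d)`, where `w` takes the value `1` at `a`, `-1` at `a+1` and `0` elsewhere. Since `w` is
injective on `{a, a+1}` and nonzero there, `w(c) = w(d)` iff `c = d` or neither index lies in
`{a, a+1}`.
-/

open MvPolynomial

/-- The integer weight of the variable `x_{c,d}` under `Ξ_a`. -/
def xiWeight {n : ℕ} (a a' c d : Fin n) : ℤ :=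
  (if c = a then 1 else 0) - (if c = a' then 1 else 0)
    - (if d = a then 1 else 0) + (if d = a' then 1 else 0)

/-- Each variable is an eigenvector of `Ξ_a`, since every summand is a multiple of an Euler
field `x ∂/∂x`. -/
lemma Xi_X_s4 {n : ℕ} (a a' c d : Fin n) :
    Xi a a' (X (c, d)) = C (xiWeight a a' c d : ℂ) * X (c, d) := by
  have row : ∀ b : Fin n, ∑ k : Fin n, (X (b, k) : MatPoly n) * pderiv (b, k) (X (c, d))
      = (if c = b then 1 else 0) * X (c, d) := by
    intro b
    rw [Finset.sum_eq_single d]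
    · by_cases h : c = b
      · subst h; simp
      · rw [pderiv_X_of_ne (by simp [h])]; simp [h]
    · intro k _ hk
      rw [pderiv_X_of_ne (by simp [hk.symm]), mul_zero]
    · simp
  have col : ∀ b : Fin n, ∑ k : Fin n, (X (k, b) : MatPoly n) * pderiv (k, b) (X (c, d))
      = (if d = b then 1 else 0) * X (c, d) := by
    intro b
    rw [Finset.sum_eq_single c]
    · by_cases h : d = b
      · subst h; simp
      · rw [pderiv_X_of_ne (by simp [h])]; simp [h]
    · intro k _ hk
      rw [pderiv_X_of_ne (by simp [hk.symm]), mul_zero]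
    · simp
  have expand : Xi a a' (X (c, d)) = ∑ k : Fin n,
      ((X (a, k) : MatPoly n) * pderiv (a, k) (X (c, d))
        - X (a', k) * pderiv (a', k) (X (c, d))
        - X (k, a) * pderiv (k, a) (X (c, d))
        + X (k, a') * pderiv (k, a') (X (c, d))) := by
    rw [Xi, ← Derivation.coeFnAddMonoidHom_apply, map_sum, Finset.sum_apply]
    simp only [Derivation.coeFnAddMonoidHom_apply, Derivation.add_apply, Derivation.sub_apply,
      Derivation.smul_apply, smul_eq_mul]
  rw [expand, Finset.sum_add_distrib, Finset.sum_sub_distrib, Finset.sum_sub_distrib,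
    row, row, col, col, xiWeight]
  push_cast
  simp only [map_add, map_sub, apply_ite C, map_one, map_zero]
  ring



theorem stmt_4 {n : ℕ} (hn : 2 ≤ n) (a a' : Fin n) (ha : (a' : ℕ) = (a : ℕ) + 1)
    (c d : Fin n) :
    Xi a a' (X (c, d)) = 0 ↔
      c = d ∨ (c ∉ ({a, a'} : Set (Fin n)) ∧ d ∉ ({a, a'} : Set (Fin n))) := by
  have hne : a ≠ a' := by
    rintro rfl
    omega
  rw [Xi_X_s4, mul_eq_zero, or_iff_left (X_ne_zero _), C_eq_zero, Int.cast_eq_zero, xiWeight]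
  simp only [Set.mem_insert_iff, Set.mem_singleton_iff]
  grind
end

section
/- Let A be a commutative ℂ-algebra. For all derivations Θ, Λ ∈ Derivation ℂ A A and all elements a, f, g ∈ A: ⁅(a*f) • Θ, g • Λ⁆ − ⁅f • Θ, (a*g) • Λ⁆ = −((f*g*(Θ a)) • Λ) − ((f*g*(Λ a)) • Θ). (The key bracket identity from the induction step in the proof of Proposition 4.5 of the paper.) -/
theorem stmt_7 {A : Type*} [CommRing A] [Algebra ℂ A]
    (Θ Λ : Derivation ℂ A A) (a f g : A) :
    ⁅(a * f) • Θ, g • Λ⁆ - ⁅f • Θ, (a * g) • Λ⁆ =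
      -((f * g * Θ a) • Λ) - ((f * g * Λ a) • Θ) := by
  -- Evaluated at an element, the second-order terms `a * f * g * Θ (Λ x)` and
  -- `a * f * g * Λ (Θ x)` cancel, and only the Leibniz terms differentiating `a` survive.
  ext x
  simp only [Derivation.sub_apply, Derivation.neg_apply, Derivation.commutator_apply,
    Derivation.smul_apply, Derivation.leibniz, smul_eq_mul]
  ring
end

section
/- There exists a constant C > 0 such that for every natural number m ≥ 1, the ℂ-dimension (finrank) of the subspace { p ∈ R : totalDegree p ≤ m and Θ_{1,2}(Θ_{1,2}(p)) = 0 } (i.e. the intersection of the kernel of Θ_{1,2} ∘ Θ_{1,2} with the subspace of polynomials of total degree at most m) is at most C · m^(n² − 1). (Proposition 5.2 (1) of the paper: ker(Θ_{1,2}² | P_m) grows at most polynomially of degree n² − 1 in m.) -/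
/-!
Write `D = Θ_{1,2}`. It sends `s = x_{1,1}` to `y = x_{2,1}`. If `D p = 0` and `s ∣ p`, then
`p = 0`: writing a nonzero `p` as `s ^ k * q` with `s ∤ q` and `k ≥ 1`, the equation
`D (s ^ k * q) = 0` gives `s ∣ y * q`, which is impossible because `s` is prime and divides neither
factor (`eq_zero_of_X_dvd`). Hence `p ↦ (p mod s, D p mod s)` is injective on the kernel of `D²`.

If `p` has degree at most `m`, then `p` and `D p` have degree at most `m + 1`, so each of the two
residues modulo `s` is determined by its coefficients at the monomials in the `n² - 1` variables
other than `s` with all exponents at most `m + 1` (`X_dvd_of_boxCoeff_eq_zero`). The dimension is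
therefore at most `2 * (m + 2) ^ (n² - 1)`, which is at most `2 * 3 ^ (n² - 1) * m ^ (n² - 1)`.
-/

open MvPolynomial

section Polynomial

variable {σ : Type*}

lemma totalDegree_pderiv_le_self (i : σ) (p : MvPolynomial σ ℂ) :
    (pderiv i p).totalDegree ≤ p.totalDegree := by
  classical
  refine Finset.sup_le fun d hd => ?_
  rw [mem_support_iff, coeff_pderiv] at hd
  have h := le_totalDegree (mem_support_iff.mpr (left_ne_zero_of_mul hd))
  rw [Finsupp.sum_add_index' (fun _ => rfl) (fun _ _ _ => rfl)] at h
  exact (Nat.le_add_right _ _).trans h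

/-- A derivation that sends the variable `X s` to a different variable `X t` kills no nonzero
multiple of `X s`. -/
lemma eq_zero_of_X_dvd (D : Derivation ℂ (MvPolynomial σ ℂ) (MvPolynomial σ ℂ)) {s t : σ}
    (hst : s ≠ t) (hD : D (X s) = X t) {p : MvPolynomial σ ℂ} (hp : D p = 0) (hs : X s ∣ p) :
    p = 0 := by
  by_contra hp0
  have hprime : Prime (X s : MvPolynomial σ ℂ) := X_prime
  obtain ⟨q, hpq, hq⟩ :=
    (FiniteMultiplicity.of_prime_left hprime hp0).exists_eq_pow_mul_and_not_dvd
  rcases hk : multiplicity (X s) p with _ | k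
  · rw [hk, pow_zero, one_mul] at hpq
    exact hq (hpq ▸ hs)
  rw [hk] at hpq
  rw [hpq, Derivation.leibniz, Derivation.leibniz_pow, hD] at hp
  simp only [smul_eq_mul, nsmul_eq_mul, Nat.add_sub_cancel] at hp
  have hfac : (X s : MvPolynomial σ ℂ) ^ k * (X s * D q + ((k + 1 : ℕ) : MvPolynomial σ ℂ) *
      (X t * q)) = 0 := by
    rw [← hp]; ring
  have hsum := (mul_eq_zero.mp hfac).resolve_left (pow_ne_zero _ hprime.ne_zero)
  have hdvd : (X s : MvPolynomial σ ℂ) ∣ ((k + 1 : ℕ) : MvPolynomial σ ℂ) * (X t * q) :=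
    ⟨-D q, by linear_combination hsum⟩
  have hunit : IsUnit ((k + 1 : ℕ) : MvPolynomial σ ℂ) := by
    have h := (isUnit_iff_ne_zero.mpr (Nat.cast_ne_zero.mpr k.succ_ne_zero : ((k + 1 : ℕ) : ℂ) ≠ 0)
      ).map (C : ℂ →+* MvPolynomial σ ℂ)
    rwa [map_natCast] at h
  rcases hprime.dvd_or_dvd (hunit.dvd_mul_left.mp hdvd) with h | h
  · exact hst (X_dvd_X.mp h)
  · exact hq h

variable [Fintype σ] [DecidableEq σ]

/-- Extension by zero at `s` of a vector of exponents less than `M`, indexed by the variables other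
than `s`. -/
noncomputable def boxExponent (s : σ) (M : ℕ) (e : {v : σ // v ≠ s} → Fin M) : σ →₀ ℕ :=
  Finsupp.equivFunOnFinite.symm fun v => if h : v ≠ s then (e ⟨v, h⟩ : ℕ) else 0

/-- The coefficients of a polynomial at the monomials that do not involve `s` and have all exponents
less than `M`. -/
noncomputable def boxCoeff (s : σ) (M : ℕ) :
    MvPolynomial σ ℂ →ₗ[ℂ] (({v : σ // v ≠ s} → Fin M) → ℂ) :=
  LinearMap.pi fun e => lcoeff ℂ (boxExponent s M e)

lemma X_dvd_of_boxCoeff_eq_zero {s : σ} {M : ℕ} {p : MvPolynomial σ ℂ} (hdeg : p.totalDegree < M)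
    (hp : boxCoeff s M p = 0) : X s ∣ p := by
  rw [X_dvd_iff_modMonomial_eq_zero]
  ext d
  rw [coeff_zero]
  by_cases hd : Finsupp.single s 1 ≤ d
  · exact coeff_modMonomial_of_le _ hd
  rw [coeff_modMonomial_of_not_le _ hd]
  have hds : d s = 0 := by
    simpa [Finsupp.single_le_iff] using hd
  by_contra hne
  have hsmall : ∀ v, d v < M := fun v =>
    ((monomial_le_degreeOf v (mem_support_iff.mpr hne)).trans
      (degreeOf_le_totalDegree p v)).trans_lt hdeg
  have he : boxExponent s M (fun v => ⟨d v, hsmall v⟩) = d := by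
    ext v
    by_cases hv : v = s
    · subst hv; simp [boxExponent, hds]
    · simp [boxExponent, hv]
  have := congrFun hp (fun v => ⟨d v, hsmall v⟩)
  exact hne (by simpa [boxCoeff, he] using this)

end Polynomial

lemma Theta_apply {n : ℕ} (a b : Fin n) (p : MatPoly n) :
    Theta a b p = ∑ k : Fin n, ((X (b, k) : MatPoly n) * pderiv (a, k) p
      - (X (k, a) : MatPoly n) * pderiv (k, b) p) := by
  change Derivation.coeFnAddMonoidHom (Theta a b) p = _
  rw [Theta, map_sum, Finset.sum_apply]
  rfl

lemma totalDegree_Theta_le {n : ℕ} (a b : Fin n) (p : MatPoly n) :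
    (Theta a b p).totalDegree ≤ p.totalDegree + 1 := by
  have hterm : ∀ i j : Fin n × Fin n,
      ((X i : MatPoly n) * pderiv j p).totalDegree ≤ p.totalDegree + 1 := fun i j => by
    have h := totalDegree_mul (X i : MatPoly n) (pderiv j p)
    rw [totalDegree_X] at h
    have h' := totalDegree_pderiv_le_self j p
    omega
  rw [Theta_apply]
  refine (totalDegree_finsetSum _ _).trans (Finset.sup_le fun k _ => ?_)
  exact (totalDegree_sub _ _).trans (max_le (hterm _ _) (hterm _ _))

lemma Theta_X_diag {n : ℕ} {a b : Fin n} (hab : a ≠ b) :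
    Theta a b (X (a, a)) = X (b, a) := by
  rw [Theta_apply, Finset.sum_eq_single a]
  · simp [pderiv_X, hab]
  · intro k _ hk
    simp [pderiv_X, hab, hk.symm]
  · simp

theorem stmt_12 {n : ℕ} (hn : 2 ≤ n)
    (i1 i2 : Fin n) (h1 : (i1 : ℕ) = 0) (h2 : (i2 : ℕ) = 1) :
    ∃ C : ℝ, 0 < C ∧ ∀ m : ℕ, 1 ≤ m →
      (Module.finrank ℂ
          ↥(restrictTotalDegree (Fin n × Fin n) ℂ m ⊓
            LinearMap.ker ((Theta i1 i2).toLinearMap ∘ₗ (Theta i1 i2).toLinearMap)) : ℝ)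
        ≤ C * (m : ℝ) ^ (n ^ 2 - 1) := by
  have hne : i1 ≠ i2 := by
    rintro rfl
    omega
  refine ⟨2 * 3 ^ (n ^ 2 - 1), by positivity, fun m hm => ?_⟩
  set D := Theta i1 i2
  set V := restrictTotalDegree (Fin n × Fin n) ℂ m ⊓ LinearMap.ker (D.toLinearMap ∘ₗ D.toLinearMap)
  let s : Fin n × Fin n := (i1, i1)
  have hst : s ≠ (i2, i1) := fun h => hne (congrArg Prod.fst h)
  have hDs : D (X s) = X (i2, i1) := Theta_X_diag hne
  let L := ((boxCoeff s (m + 2)).prod (boxCoeff s (m + 2) ∘ₗ D.toLinearMap)) ∘ₗ V.subtype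
  have hL : Function.Injective L := by
    rw [← LinearMap.ker_eq_bot, LinearMap.ker_eq_bot']
    rintro ⟨p, hp⟩ h0
    obtain ⟨hpm, hpk⟩ := Submodule.mem_inf.mp hp
    rw [mem_restrictTotalDegree] at hpm
    have hDD : D (D p) = 0 := hpk
    have hp0 : boxCoeff s (m + 2) p = 0 := congrArg Prod.fst h0
    have hDp0 : boxCoeff s (m + 2) (D p) = 0 := congrArg Prod.snd h0
    have hdeg : (D p).totalDegree ≤ p.totalDegree + 1 := totalDegree_Theta_le i1 i2 p
    have hDp : D p = 0 :=
      eq_zero_of_X_dvd D hst hDs hDD (X_dvd_of_boxCoeff_eq_zero (by omega) hDp0)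
    have hp' : p = 0 :=
      eq_zero_of_X_dvd D hst hDs hDp (X_dvd_of_boxCoeff_eq_zero (by omega) hp0)
    exact Subtype.ext hp'
  have hcard : Fintype.card {v : Fin n × Fin n // v ≠ s} = n ^ 2 - 1 := by
    simp [Fintype.card_subtype_compl, sq]
  have hrank : Module.finrank ℂ V ≤ 2 * (m + 2) ^ (n ^ 2 - 1) := by
    refine (LinearMap.finrank_le_finrank_of_injective hL).trans (le_of_eq ?_)
    rw [Module.finrank_prod, Module.finrank_fintype_fun_eq_card, Fintype.card_fun, hcard,
      Fintype.card_fin, two_mul]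
  have hm' : (m : ℝ) + 2 ≤ 3 * m := by
    have : (1 : ℝ) ≤ m := by exact_mod_cast hm
    linarith
  calc (Module.finrank ℂ V : ℝ) ≤ 2 * ((m : ℝ) + 2) ^ (n ^ 2 - 1) := by exact_mod_cast hrank
    _ ≤ 2 * (3 * (m : ℝ)) ^ (n ^ 2 - 1) := by gcongr
    _ = 2 * 3 ^ (n ^ 2 - 1) * (m : ℝ) ^ (n ^ 2 - 1) := by rw [mul_pow, mul_assoc]
end

section
/- There exists a constant C > 0 such that for every natural number m ≥ 1, the ℂ-dimension (finrank) of the subspace { p ∈ R : totalDegree p ≤ m and Ξ_1(Ξ_1(p)) = 0 } (i.e. the intersection of the kernel of Ξ_1 ∘ Ξ_1 with the subspace of polynomials of total degree at most m) is at most C · m^(n² − 1). (Proposition 5.2 (2) of the paper: ker(Ξ_1² | P_m) grows at most polynomially of degree n² − 1 in m.) -/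
/-!
The field `Ξ_a` is a combination of the Euler fields `x_q ∂/∂x_q`, hence diagonal in the monomial
basis: it multiplies `x^s` by the weight `∑ q, c q * s q`, where `c = XiWeight a a'`
(`coeff_Xi`). So `Ξ_a (Ξ_a p) = 0` forces every exponent of `p` to have weight zero. Since
`c (a, a') = 2 ≠ 0`, an exponent of weight zero is determined by its entries other than the one at
`(a, a')`. In total degree at most `m` each of the remaining `n ^ 2 - 1` entries lies in
`{0, …, m}`, so there are at most `(m + 1) ^ (n ^ 2 - 1) ≤ 2 ^ (n ^ 2 - 1) * m ^ (n ^ 2 - 1)` such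
exponents, and these bound the dimension.
-/

open MvPolynomial

/-- The eigenvalue of `Xi a a'` on the variable `X q`. -/
def XiWeight {n : ℕ} (a a' : Fin n) (q : Fin n × Fin n) : ℂ :=
  (if q.1 = a then 1 else 0) - (if q.1 = a' then 1 else 0)
    - (if q.2 = a then 1 else 0) + (if q.2 = a' then 1 else 0)

theorem coeff_X_mul_pderiv {σ : Type*} (i : σ) (p : MvPolynomial σ ℂ) (s : σ →₀ ℕ) :
    coeff s (X i * pderiv i p) = (s i : ℂ) * coeff s p := by
  classical
  induction p using MvPolynomial.induction_on' with
  | monomial u r =>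
    rw [X_mul_pderiv_monomial, coeff_smul, coeff_monomial]
    split_ifs with h
    · subst h; simp
    · simp
  | add p q hp hq => rw [map_add, mul_add, coeff_add, coeff_add, hp, hq, mul_add]

theorem coeff_Xi {n : ℕ} (a a' : Fin n) (p : MatPoly n) (s : Fin n × Fin n →₀ ℕ) :
    coeff s (Xi a a' p) = (∑ q, XiWeight a a' q * (s q : ℂ)) * coeff s p := by
  have h : coeff s (Xi a a' p) = ∑ k : Fin n, ((s (a, k) : ℂ) - s (a', k) - s (k, a) + s (k, a'))
      * coeff s p := by
    have hsum (D : Fin n → Derivation ℂ (MatPoly n) (MatPoly n)) : (∑ k, D k) p = ∑ k, D k p := by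
      have := congrFun (map_sum (Derivation.coeFnAddMonoidHom (R := ℂ) (A := MatPoly n)
        (M := MatPoly n)) D Finset.univ) p
      rwa [Finset.sum_apply] at this
    simp only [Xi, hsum, coeff_sum, Derivation.add_apply,
      Derivation.sub_apply, Derivation.smul_apply, smul_eq_mul, coeff_add, coeff_sub,
      coeff_X_mul_pderiv]
    exact Finset.sum_congr rfl fun k _ => by ring
  rw [h, ← Finset.sum_mul]
  congr 1
  simp only [XiWeight, add_mul, sub_mul, Finset.sum_add_distrib, Finset.sum_sub_distrib]
  congr 1
  · congr 1
    · congr 1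
      · rw [Fintype.sum_prod_type_right]; simp
      · rw [Fintype.sum_prod_type_right]; simp
    · rw [Fintype.sum_prod_type]; simp
  · rw [Fintype.sum_prod_type]; simp

/-- The exponents of total degree at most `m` on which a linear form `c` vanishes are determined by
their entries away from any coordinate `q₀` with `c q₀ ≠ 0`. -/
theorem finite_and_card_le_of_weight {σ : Type*} [Fintype σ] [DecidableEq σ] (c : σ → ℂ) (q₀ : σ)
    (hc : c q₀ ≠ 0) (m : ℕ) (S : Set (σ →₀ ℕ))
    (hS : ∀ s ∈ S, s.degree ≤ m ∧ ∑ q, c q * (s q : ℂ) = 0) :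
    Finite S ∧ Nat.card S ≤ (m + 1) ^ (Fintype.card σ - 1) := by
  let f : S → ({q : σ // q ≠ q₀} → Fin (m + 1)) := fun s q =>
    ⟨s.1 q, Nat.lt_succ_of_le ((Finsupp.le_degree q.1 s.1).trans (hS s.1 s.2).1)⟩
  have hf : Function.Injective f := by
    intro s t hst
    have hne : ∀ q, q ≠ q₀ → s.1 q = t.1 q := fun q hq => by
      have := congrFun hst ⟨q, hq⟩
      simpa [f] using this
    have h1 := (hS s.1 s.2).2
    have h2 := (hS t.1 t.2).2
    rw [← Finset.add_sum_erase _ _ (Finset.mem_univ q₀)] at h1 h2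
    have h3 : ∑ q ∈ Finset.univ.erase q₀, c q * (s.1 q : ℂ)
        = ∑ q ∈ Finset.univ.erase q₀, c q * (t.1 q : ℂ) :=
      Finset.sum_congr rfl fun q hq => by rw [hne q (Finset.ne_of_mem_erase hq)]
    have h4 : c q₀ * (s.1 q₀ : ℂ) = c q₀ * (t.1 q₀ : ℂ) := by
      rw [h3] at h1
      exact add_right_cancel (h1.trans h2.symm)
    have h5 : s.1 q₀ = t.1 q₀ := by exact_mod_cast mul_left_cancel₀ hc h4
    ext q
    by_cases hq : q = q₀
    · rw [hq, h5]
    · exact hne q hq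
  refine ⟨Finite.of_injective f hf, (Nat.card_le_card_of_injective f hf).trans_eq ?_⟩
  simp [Nat.card_eq_fintype_card, Fintype.card_subtype_compl]

theorem stmt_13 {n : ℕ} (hn : 2 ≤ n)
    (i1 i2 : Fin n) (h1 : (i1 : ℕ) = 0) (h2 : (i2 : ℕ) = 1) :
    ∃ C : ℝ, 0 < C ∧ ∀ m : ℕ, 1 ≤ m →
      (Module.finrank ℂ
          ↥(restrictTotalDegree (Fin n × Fin n) ℂ m ⊓
            LinearMap.ker ((Xi i1 i2).toLinearMap ∘ₗ (Xi i1 i2).toLinearMap)) : ℝ)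
        ≤ C * (m : ℝ) ^ (n ^ 2 - 1) := by
  refine ⟨2 ^ (n ^ 2 - 1), by positivity, fun m hm => ?_⟩
  have hne : i1 ≠ i2 := by rintro rfl; omega
  have hc : XiWeight i1 i2 (i1, i2) ≠ 0 := by
    simp [XiWeight, hne, hne.symm]
  let S : Set (Fin n × Fin n →₀ ℕ) :=
    {s | s.degree ≤ m ∧ ∑ q, XiWeight i1 i2 q * (s q : ℂ) = 0}
  obtain ⟨hfin, hcard⟩ := finite_and_card_le_of_weight _ _ hc m S fun s hs => hs
  have hle : restrictTotalDegree (Fin n × Fin n) ℂ m ⊓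
      LinearMap.ker ((Xi i1 i2).toLinearMap ∘ₗ (Xi i1 i2).toLinearMap)
        ≤ restrictSupport ℂ S := by
    rintro p ⟨hp, hk⟩
    rw [SetLike.mem_coe, mem_restrictTotalDegree] at hp
    intro s hs
    have hs' : coeff s p ≠ 0 := mem_support_iff.mp hs
    have hk' : Xi i1 i2 (Xi i1 i2 p) = 0 := hk
    refine ⟨(le_totalDegree hs).trans hp, ?_⟩
    have h0 := congrArg (coeff s) hk'
    rw [coeff_Xi, coeff_Xi, coeff_zero] at h0
    simpa [hs'] using h0
  have hfm : Module.Finite ℂ (restrictSupport ℂ S) :=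
    Module.Finite.of_basis (basisRestrictSupport ℂ S)
  have hrank := (Submodule.finrank_mono hle).trans_eq
    (Module.finrank_eq_nat_card_basis (basisRestrictSupport ℂ S))
  have hexp : Fintype.card (Fin n × Fin n) = n ^ 2 := by simp [sq]
  rw [hexp] at hcard
  have hm' : m + 1 ≤ 2 * m := by omega
  rw [← mul_pow]
  exact_mod_cast (hrank.trans hcard).trans (Nat.pow_le_pow_left hm' _)
end

section
/- Let Θ ∈ Derivation ℂ A A be the derivation x • ∂/∂w + y • ∂/∂x, i.e. the unique ℂ-derivation with Θ(w) = x, Θ(x) = y and Θ(y) = 0. Then for every natural number m ≥ 1, the ℂ-dimension (finrank) of the subspace { p ∈ homogeneousSubmodule (Fin 3) ℂ m : Θ(p) = 0 } of homogeneous polynomials of total degree m annihilated by Θ is at most 3·m. (Lemma 5.4 of the paper.) -/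
/-!
Comparing coefficients of `w ^ a * x ^ (b + 1) * y ^ c` in `Θ p = 0` expresses the coefficient of
`w ^ (a + 1) * x ^ b * y ^ c` in `p` as a multiple of the coefficient of
`w ^ a * x ^ (b + 2) * y ^ (c - 1)` (and shows that it vanishes when `c = 0`). By induction on the
exponent of `w`, a polynomial killed by `Θ` is determined by its coefficients at the monomials
free of `w`. In degree `m` there are `m + 1` of those, and `m + 1 ≤ 3 * m` for `m ≥ 1`.
-/

open MvPolynomial

/-- The polynomial ring `ℂ[w, x, y]` with `w := X 0`, `x := X 1`, `y := X 2`. -/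
abbrev A3 := MvPolynomial (Fin 3) ℂ

/-- The derivation `x • ∂/∂w + y • ∂/∂x` on `ℂ[w, x, y]`. -/
noncomputable def ThetaWXY : Derivation ℂ A3 A3 :=
  (X 1 : A3) • (pderiv 0 : Derivation ℂ A3 A3) + (X 2 : A3) • (pderiv 1 : Derivation ℂ A3 A3)

/-- The exponent vector of `w ^ a * x ^ b * y ^ c`. -/
noncomputable def expo (a b c : ℕ) : Fin 3 →₀ ℕ :=
  Finsupp.single 0 a + Finsupp.single 1 b + Finsupp.single 2 c

lemma expo_apply (d : Fin 3 →₀ ℕ) : expo (d 0) (d 1) (d 2) = d := by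
  ext i
  fin_cases i <;> simp [expo]

lemma coeff_succ_succ {p : A3} (hp : ThetaWXY p = 0) (a b c : ℕ) :
    ((a : ℂ) + 1) * coeff (expo (a + 1) b (c + 1)) p
      + ((b : ℂ) + 2) * coeff (expo a (b + 2) c) p = 0 := by
  have h := congrArg (coeff (expo a (b + 1) (c + 1))) hp
  have e1 : expo a (b + 1) (c + 1) = Finsupp.single 1 1 + expo a b (c + 1) := by
    ext i; fin_cases i <;> simp [expo, add_comm]
  have e2 : expo a (b + 1) (c + 1) = Finsupp.single 2 1 + expo a (b + 1) c := by
    ext i; fin_cases i <;> simp [expo, add_comm]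
  have e3 : expo a b (c + 1) + Finsupp.single 0 1 = expo (a + 1) b (c + 1) := by
    ext i; fin_cases i <;> simp [expo]
  have e4 : expo a (b + 1) c + Finsupp.single 1 1 = expo a (b + 2) c := by
    ext i; fin_cases i <;> simp [expo]
  simp only [ThetaWXY, Derivation.add_apply, Derivation.smul_apply, smul_eq_mul, coeff_add,
    coeff_zero] at h
  rw [e1, coeff_X_mul, ← e1, e2, coeff_X_mul, coeff_pderiv, coeff_pderiv, e3, e4] at h
  have e5 : expo a b (c + 1) 0 = a := by simp [expo]
  have e6 : expo a (b + 1) c 1 = b + 1 := by simp [expo]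
  rw [e5, e6] at h
  push_cast at h
  linear_combination h

lemma coeff_succ_zero {p : A3} (hp : ThetaWXY p = 0) (a b : ℕ) :
    coeff (expo (a + 1) b 0) p = 0 := by
  have h := congrArg (coeff (expo a (b + 1) 0)) hp
  have e1 : expo a (b + 1) 0 = Finsupp.single 1 1 + expo a b 0 := by
    ext i; fin_cases i <;> simp [expo, add_comm]
  have e3 : expo a b 0 + Finsupp.single 0 1 = expo (a + 1) b 0 := by
    ext i; fin_cases i <;> simp [expo]
  have hs : (2 : Fin 3) ∉ (expo a (b + 1) 0).support := by simp [expo]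
  simp only [ThetaWXY, Derivation.add_apply, Derivation.smul_apply, smul_eq_mul, coeff_add,
    coeff_zero] at h
  rw [coeff_X_mul' _ 2, if_neg hs, e1, coeff_X_mul, coeff_pderiv, e3, add_zero] at h
  exact (mul_eq_zero.mp h).resolve_right (Nat.cast_add_one_ne_zero _)

/-- A polynomial killed by `Θ` is zero as soon as its `w`-free coefficients vanish. -/
lemma eq_zero_of_coeff {p : A3} (hp : ThetaWXY p = 0)
    (h0 : ∀ b c, coeff (expo 0 b c) p = 0) : p = 0 := by
  have key : ∀ a b c, coeff (expo a b c) p = 0 := by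
    intro a
    induction a with
    | zero => exact h0
    | succ a ih =>
      rintro b (_ | c)
      · exact coeff_succ_zero hp a b
      · have h := coeff_succ_succ hp a b c
        rw [ih, mul_zero, add_zero] at h
        exact (mul_eq_zero.mp h).resolve_left (Nat.cast_add_one_ne_zero _)
  ext d
  rw [← expo_apply d, key, coeff_zero]

theorem stmt_14 (m : ℕ) (hm : 1 ≤ m) :
    Module.finrank ℂ
        ↥(homogeneousSubmodule (Fin 3) ℂ m ⊓ LinearMap.ker ThetaWXY.toLinearMap)
      ≤ 3 * m := by
  -- The vector of coefficients at the monomials `x ^ b * y ^ (m - b)`, `0 ≤ b ≤ m`.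
  let L : ↥(homogeneousSubmodule (Fin 3) ℂ m ⊓ LinearMap.ker ThetaWXY.toLinearMap) →ₗ[ℂ]
      (Fin (m + 1) → ℂ) :=
    (LinearMap.pi fun b : Fin (m + 1) => MvPolynomial.lcoeff ℂ (expo 0 b (m - b))) ∘ₗ
      Submodule.subtype _
  have hL : Function.Injective L := by
    rw [injective_iff_map_eq_zero]
    rintro ⟨p, hp, hk⟩ h
    have hp' : p.IsHomogeneous m := hp
    refine Subtype.ext (eq_zero_of_coeff hk fun b c => ?_)
    by_cases hbc : b + c = m
    · have := congrFun h ⟨b, by omega⟩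
      obtain rfl : c = m - b := by omega
      exact this
    · refine hp'.coeff_eq_zero ?_
      simpa [expo, Finsupp.degree_eq_sum, Fin.sum_univ_three] using hbc
  have := LinearMap.finrank_le_finrank_of_injective hL
  rw [Module.finrank_fin_fun] at this
  omega
end

section
/- Let N ≥ 2 be a natural number. Let Ψ ∈ Derivation ℂ B B be a derivation such that Ψ(u_i) is homogeneous of total degree 1 for every i ∈ Fin N (so Ψ maps each homogeneous component of B into itself). Let D ∈ Derivation ℂ A A be the unique derivation with D(x) = y, D(y) = 0, and D(X (Sum.inr i)) = rename Sum.inr (Ψ(u_i)) for all i ∈ Fin N. Assume there exists a constant C > 0 such that for all m, the ℂ-dimension of { q ∈ homogeneousSubmodule (Fin N) ℂ m : Ψ(q) = 0 } is at most C·(m+1)^(N−2). Then there exist constants C₁, C₂ > 0 such that for all m: (i) the ℂ-dimension K_m of { p ∈ homogeneousSubmodule (Fin 2 ⊕ Fin N) ℂ m : D(p) = 0 } is at most C₁·(m+1)^N, and (ii) Σ_{j=0}^{m} K_j ≤ C₂·(m+1)^(N+1). (Lemma 5.5 of the paper, the growth-induction lemma.) -/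
/-!
Write `x`, `y` for the first two variables. A nonzero element of `ker D` is never divisible by `x`:
if `p = x ^ k * r` with `k ≥ 1` and `D p = 0`, then dividing by `x ^ (k - 1)` gives
`k * y * r + x * D r = 0`, so `x ∣ r`; hence every power of `x` divides `p`, and `p = 0`
(`eq_zero_of_X_dvd`). Therefore a homogeneous `p ∈ ker D` of degree `m` is determined by its
coefficients at the degree `m` monomials free of `x`. Such a monomial is determined by its exponents
in the `N` variables `u_i`, each at most `m`, so there are at most `(m + 1) ^ N` of them
(`finrank_ker_le`). Summing over degrees gives the second bound. Both bounds hold with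
constant `1`.
-/

open MvPolynomial

section

variable {N : ℕ}

/-- The exponent of the monomial in `x, y, u_i` free of `x`, with `u`-exponents `f` and with the
`y`-exponent that makes the total degree `m`. If `∑ f i > m` the truncated subtraction gives a monomial
of larger degree, which is harmless: its coefficient is merely a redundant coordinate. -/
noncomputable def xFreeExponent (m : ℕ) (f : Fin N → Fin (m + 1)) : Fin 2 ⊕ Fin N →₀ ℕ :=
  Finsupp.equivFunOnFinite.symm (Sum.elim ![0, m - ∑ i, (f i : ℕ)] fun i => (f i : ℕ))

/-- The coefficients of a polynomial at the monomials `xFreeExponent m f`. -/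
noncomputable def xFreeCoeffs (m : ℕ) :
    MvPolynomial (Fin 2 ⊕ Fin N) ℂ →ₗ[ℂ] ((Fin N → Fin (m + 1)) → ℂ) :=
  LinearMap.pi fun f => lcoeff ℂ (xFreeExponent m f)

lemma X_dvd_of_xFreeCoeffs_eq_zero {m : ℕ} {p : MvPolynomial (Fin 2 ⊕ Fin N) ℂ}
    (hp : p.IsHomogeneous m) (h : xFreeCoeffs m p = 0) : X (Sum.inl 0) ∣ p := by
  rw [X_dvd_iff_modMonomial_eq_zero]
  ext d
  rw [coeff_zero]
  by_cases hd : Finsupp.single (Sum.inl 0) 1 ≤ d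
  · exact coeff_modMonomial_of_le _ hd
  rw [coeff_modMonomial_of_not_le _ hd]
  by_contra hne
  have hd0 : d (Sum.inl 0) = 0 := by
    rw [Finsupp.single_le_iff] at hd
    omega
  have hdeg : d (Sum.inl 1) + ∑ i, d (Sum.inr i) = m := by
    have : d.degree = m := (DFunLike.congr_fun Finsupp.degree_eq_weight_one d).trans (hp hne)
    rw [Finsupp.degree_eq_sum] at this
    simpa [hd0] using this
  have hle : ∀ i, d (Sum.inr i) < m + 1 := fun i => by
    have := Finset.single_le_sum (f := fun i => d (Sum.inr i)) (fun _ _ => Nat.zero_le _)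
      (Finset.mem_univ i)
    omega
  have hE : xFreeExponent m (fun i => ⟨d (Sum.inr i), hle i⟩) = d := by
    ext s
    rcases s with s | i
    · fin_cases s
      · simp [xFreeExponent, hd0]
      · simp [xFreeExponent]
        omega
    · simp [xFreeExponent]
  have := congrFun h (fun i => ⟨d (Sum.inr i), hle i⟩)
  simp only [xFreeCoeffs, LinearMap.pi_apply, lcoeff_apply, hE, Pi.zero_apply] at this
  exact hne this

lemma eq_zero_of_X_dvd_s15
    (D : Derivation ℂ (MvPolynomial (Fin 2 ⊕ Fin N) ℂ) (MvPolynomial (Fin 2 ⊕ Fin N) ℂ))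
    (hDx : D (X (Sum.inl 0)) = X (Sum.inl 1))
    {p : MvPolynomial (Fin 2 ⊕ Fin N) ℂ} (hp : D p = 0) (hx : X (Sum.inl 0) ∣ p) : p = 0 := by
  have hprime : Prime (X (Sum.inl 0) : MvPolynomial (Fin 2 ⊕ Fin N) ℂ) := X_prime
  have hpow : ∀ k : ℕ, X (Sum.inl 0) ^ (k + 1) ∣ p := by
    intro k
    induction k with
    | zero => simpa using hx
    | succ k ih =>
      obtain ⟨r, rfl⟩ := ih
      rw [D.leibniz, D.leibniz_pow, hDx] at hp
      have h1 : (X (Sum.inl 0) : MvPolynomial (Fin 2 ⊕ Fin N) ℂ) ^ k *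
          (X (Sum.inl 0) * D r + C ((k : ℂ) + 1) * (X (Sum.inl 1) * r)) = 0 := by
        rw [← hp]
        simp only [smul_eq_mul, nsmul_eq_mul, map_add, map_natCast, map_one, Nat.add_sub_cancel]
        push_cast
        ring
      have h2 := (mul_eq_zero.1 h1).resolve_left (pow_ne_zero _ hprime.ne_zero)
      have h3 : (X (Sum.inl 0) : MvPolynomial (Fin 2 ⊕ Fin N) ℂ) ∣
          C ((k : ℂ) + 1) * (X (Sum.inl 1) * r) :=
        (dvd_add_right (dvd_mul_right _ _)).1 (h2 ▸ dvd_zero _)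
      have hk : IsUnit (C ((k : ℂ) + 1) : MvPolynomial (Fin 2 ⊕ Fin N) ℂ) :=
        (IsUnit.mk0 _ (Nat.cast_add_one_ne_zero k)).map C
      rw [hk.dvd_mul_left] at h3
      rcases hprime.dvd_or_dvd h3 with h4 | h4
      · rw [X_dvd_X] at h4
        simp at h4
      · rw [pow_succ _ (k + 1)]
        exact mul_dvd_mul_left _ h4
  by_contra hne
  obtain ⟨n, hn⟩ := FiniteMultiplicity.of_prime_left hprime hne
  exact hn (hpow n)

lemma finrank_ker_le
    (D : Derivation ℂ (MvPolynomial (Fin 2 ⊕ Fin N) ℂ) (MvPolynomial (Fin 2 ⊕ Fin N) ℂ))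
    (hDx : D (X (Sum.inl 0)) = X (Sum.inl 1)) (m : ℕ) :
    Module.finrank ℂ
      ↥(homogeneousSubmodule (Fin 2 ⊕ Fin N) ℂ m ⊓ LinearMap.ker D.toLinearMap)
      ≤ (m + 1) ^ N := by
  have hinj : Function.Injective ((xFreeCoeffs m).domRestrict
      (homogeneousSubmodule (Fin 2 ⊕ Fin N) ℂ m ⊓ LinearMap.ker D.toLinearMap)) := by
    rw [injective_iff_map_eq_zero]
    rintro ⟨p, hp, hD⟩ h
    exact Subtype.ext (eq_zero_of_X_dvd_s15 D hDx hD (X_dvd_of_xFreeCoeffs_eq_zero hp h))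
  simpa using LinearMap.finrank_le_finrank_of_injective hinj

end

theorem stmt_15 (N : ℕ) (hN : 2 ≤ N)
    (Ψ : Derivation ℂ (MvPolynomial (Fin N) ℂ) (MvPolynomial (Fin N) ℂ))
    (hΨ : ∀ i : Fin N, Ψ (X i) ∈ homogeneousSubmodule (Fin N) ℂ 1)
    (D : Derivation ℂ (MvPolynomial (Fin 2 ⊕ Fin N) ℂ) (MvPolynomial (Fin 2 ⊕ Fin N) ℂ))
    (hDx : D (X (Sum.inl 0)) = X (Sum.inl 1))
    (hDy : D (X (Sum.inl 1)) = 0)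
    (hDu : ∀ i : Fin N, D (X (Sum.inr i)) = rename Sum.inr (Ψ (X i)))
    (C : ℝ) (hC : 0 < C)
    (hker : ∀ m : ℕ,
      (Module.finrank ℂ
          ↥(homogeneousSubmodule (Fin N) ℂ m ⊓ LinearMap.ker Ψ.toLinearMap) : ℝ)
        ≤ C * ((m : ℝ) + 1) ^ (N - 2)) :
    ∃ C₁ : ℝ, 0 < C₁ ∧ ∃ C₂ : ℝ, 0 < C₂ ∧ ∀ m : ℕ,
      (Module.finrank ℂ
          ↥(homogeneousSubmodule (Fin 2 ⊕ Fin N) ℂ m ⊓ LinearMap.ker D.toLinearMap) : ℝ)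
          ≤ C₁ * ((m : ℝ) + 1) ^ N
      ∧ (∑ j ∈ Finset.range (m + 1),
            (Module.finrank ℂ
              ↥(homogeneousSubmodule (Fin 2 ⊕ Fin N) ℂ j ⊓
                LinearMap.ker D.toLinearMap) : ℝ))
          ≤ C₂ * ((m : ℝ) + 1) ^ (N + 1) := by
  have hK : ∀ m : ℕ, (Module.finrank ℂ
      ↥(homogeneousSubmodule (Fin 2 ⊕ Fin N) ℂ m ⊓ LinearMap.ker D.toLinearMap) : ℝ)
      ≤ ((m : ℝ) + 1) ^ N := fun m => by
    exact_mod_cast finrank_ker_le D hDx m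
  refine ⟨1, one_pos, 1, one_pos, fun m => ⟨by simpa using hK m, ?_⟩⟩
  have hsum := Finset.sum_le_card_nsmul (Finset.range (m + 1)) (fun j => (Module.finrank ℂ
      ↥(homogeneousSubmodule (Fin 2 ⊕ Fin N) ℂ j ⊓ LinearMap.ker D.toLinearMap) : ℝ))
      (((m : ℝ) + 1) ^ N) fun j hj => by
    have hjm : (j : ℝ) ≤ m := by
      exact_mod_cast Nat.lt_succ_iff.1 (Finset.mem_range.1 hj)
    exact (hK j).trans (by gcongr)
  refine hsum.trans (le_of_eq ?_)
  rw [Finset.card_range, nsmul_eq_mul]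
  push_cast
  ring
end
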